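/- arXiv:1609.01080 — 2 statements merged into one kernel-verified Lean document; each statement's English description precedes it below -/
import Mathlib

section
/- Let n ≥ 3, m ≥ 2, and x_1, …, x_m ∈ ℝ^n be pairwise distinct points. Then for every u ∈ C_c^∞(ℝ^n), ∫_{ℝ^n} |∇u|² dx ≥ ((n-2)²/m²) Σ_{1 ≤ i < j ≤ m} ∫_{ℝ^n} |(x - x_i)/|x - x_i|² - (x - x_j)/|x - x_j|²|² u(x)² dx. -/
open MeasureTheory Finset

lemma mh_locInt (n : ℕ) (hn : 3 ≤ n) :
    LocallyIntegrable (fun x : EuclideanSpace ℝ (Fin n) => (‖x‖ ^ 2)⁻¹) := by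
  have : Nonempty (Fin n) := ⟨⟨0, by omega⟩⟩
  have : Nontrivial (EuclideanSpace ℝ (Fin n)) := inferInstance
  intro x
  refine ⟨Metric.ball 0 (‖x‖ + 1), Metric.isOpen_ball.mem_nhds (by simp), ?_⟩
  rw [← integrable_indicator_iff Metric.isOpen_ball.measurableSet]
  have h := (integrable_fun_norm_addHaar (volume : Measure (EuclideanSpace ℝ (Fin n)))
    (f := Set.indicator (Set.Iio (‖x‖ + 1)) (fun r : ℝ => (r ^ 2)⁻¹))).2 ?_
  · refine h.congr (Filter.Eventually.of_forall fun y => ?_)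
    simp [Set.indicator, Metric.mem_ball]
  · have hc : IntegrableOn (fun y : ℝ => y ^ (n - 3)) (Set.Ioo 0 (‖x‖ + 1)) :=
      ((continuous_pow _).integrableOn_Icc).mono_set Set.Ioo_subset_Icc_self
    rw [← integrable_indicator_iff measurableSet_Ioo] at hc
    rw [← integrable_indicator_iff measurableSet_Ioi]
    refine hc.congr (Filter.Eventually.of_forall fun y => ?_)
    by_cases h1 : 0 < y <;> by_cases h2 : y < ‖x‖ + 1 <;> simp [Set.indicator, h1, h2]
    obtain ⟨k, rfl⟩ := Nat.exists_eq_add_of_le hn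
    have : 3 + k - 1 = k + 2 := by omega
    rw [this, pow_add]
    simp
    field_simp

lemma mh_int0 (n : ℕ) (hn : 3 ≤ n) (f : EuclideanSpace ℝ (Fin n) → ℝ)
    (hf : Continuous f) (hs : HasCompactSupport f) :
    Integrable (fun x => f x * (‖x‖ ^ 2)⁻¹) :=
  (mh_locInt n hn).integrable_smul_left_of_hasCompactSupport hf hs

lemma mh_ibp (n : ℕ) (f : EuclideanSpace ℝ (Fin n) → ℝ)
    (hf : ContDiff ℝ 1 f) (hs : HasCompactSupport f) (e : ℝ) (he : 0 < e) :
    ∫ x, fderiv ℝ f x x * (‖x‖ ^ 2 + e)⁻¹ =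
      - ∫ x, f x * (n * (‖x‖ ^ 2 + e)⁻¹ - 2 * ‖x‖ ^ 2 * ((‖x‖ ^ 2 + e)⁻¹) ^ 2) := by
  have hpos : ∀ x : EuclideanSpace ℝ (Fin n), ‖x‖ ^ 2 + e ≠ 0 := fun x => by positivity
  have hcf : Continuous (fderiv ℝ f) := hf.continuous_fderiv (by norm_num)
  have hcW : Continuous (fun x : EuclideanSpace ℝ (Fin n) => (‖x‖ ^ 2 + e)⁻¹) := by
    fun_prop (disch := exact hpos)
  have hsf : HasCompactSupport (fderiv ℝ f) := hs.fderiv (𝕜 := ℝ)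
  let b := EuclideanSpace.basisFun (Fin n) ℝ
  have hcoord : ∀ (k : Fin n), Continuous (fun x : EuclideanSpace ℝ (Fin n) => x k) := by
    intro k; fun_prop
  have hder : ∀ (k : Fin n) (x : EuclideanSpace ℝ (Fin n)),
      HasFDerivAt (fun x : EuclideanSpace ℝ (Fin n) => x k * (‖x‖ ^ 2 + e)⁻¹)
        (x k • (-((‖x‖ ^ 2 + e) ^ 2)⁻¹ • ((2 : ℝ) • innerSL ℝ x)) +
          (‖x‖ ^ 2 + e)⁻¹ • (EuclideanSpace.proj k : EuclideanSpace ℝ (Fin n) →L[ℝ] ℝ)) x := by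
    intro k x
    have h1 : HasFDerivAt (fun x : EuclideanSpace ℝ (Fin n) => x k)
      (EuclideanSpace.proj k : EuclideanSpace ℝ (Fin n) →L[ℝ] ℝ) x :=
      (EuclideanSpace.proj k : EuclideanSpace ℝ (Fin n) →L[ℝ] ℝ).hasFDerivAt
    have h2 : HasFDerivAt (fun x : EuclideanSpace ℝ (Fin n) => ‖x‖ ^ 2 + e)
      ((2 : ℝ) • innerSL ℝ x) x := by
      have := ((hasStrictFDerivAt_norm_sq x).hasFDerivAt).add_const e
      exact this.congr_fderiv (by ext v; simp [two_smul])
    have h3 := (hasDerivAt_inv (hpos x)).comp_hasFDerivAt x h2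
    exact h1.mul h3
  have hval : ∀ (k : Fin n) (x : EuclideanSpace ℝ (Fin n)),
      fderiv ℝ (fun x : EuclideanSpace ℝ (Fin n) => x k * (‖x‖ ^ 2 + e)⁻¹) x (b k)
       = (‖x‖ ^ 2 + e)⁻¹ - 2 * (x k) ^ 2 * ((‖x‖ ^ 2 + e)⁻¹) ^ 2 := by
    intro k x
    rw [(hder k x).fderiv]
    simp [b, EuclideanSpace.inner_single_right]
    ring
  have hI1 : ∀ k, Integrable (fun x => fderiv ℝ f x (b k) * (x k * (‖x‖ ^ 2 + e)⁻¹)) := by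
    intro k
    refine Continuous.integrable_of_hasCompactSupport ?_ ?_
    · exact (hcf.clm_apply continuous_const).mul ((hcoord k).mul hcW)
    · refine HasCompactSupport.mul_right ?_
      exact hs.fderiv_apply (𝕜 := ℝ) (b k)
  have hI2 : ∀ k : Fin n, Integrable (fun x => f x *
      ((‖x‖ ^ 2 + e)⁻¹ - 2 * (x k) ^ 2 * ((‖x‖ ^ 2 + e)⁻¹) ^ 2)) := by
    intro k
    refine Continuous.integrable_of_hasCompactSupport ?_ hs.mul_right
    exact hf.continuous.mul (hcW.sub ((continuous_const.mul ((hcoord k).pow 2)).mul (hcW.pow 2)))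
  have hk : ∀ k : Fin n, ∫ x, fderiv ℝ f x (b k) * (x k * (‖x‖ ^ 2 + e)⁻¹) =
      - ∫ x, f x * ((‖x‖ ^ 2 + e)⁻¹ - 2 * (x k) ^ 2 * ((‖x‖ ^ 2 + e)⁻¹) ^ 2) := by
    intro k
    have := integral_mul_fderiv_eq_neg_fderiv_mul_of_integrable (𝕜 := ℝ) (v := b k)
      (μ := (volume : Measure (EuclideanSpace ℝ (Fin n)))) (f := f)
      (g := fun x : EuclideanSpace ℝ (Fin n) => x k * (‖x‖ ^ 2 + e)⁻¹) (hI1 k)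
      (by simpa only [hval] using hI2 k)
      (Continuous.integrable_of_hasCompactSupport
        (hf.continuous.mul ((hcoord k).mul hcW)) hs.mul_right)
      (fun x _ => hf.differentiable (by norm_num) x)
      (fun x _ => (hder k x).differentiableAt)
    simp only [hval] at this
    rw [this, neg_neg]
  calc _ = ∫ x, ∑ k, fderiv ℝ f x (b k) * (x k * (‖x‖ ^ 2 + e)⁻¹) := by
        congr 1; ext x
        have hx : x = ∑ k, x k • b k := by
          simpa [b] using (b.sum_repr x).symm
        conv_lhs => rw [show fderiv ℝ f x x = fderiv ℝ f x (∑ k, x k • b k) by rw [← hx]]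
        rw [map_sum, sum_mul]
        refine sum_congr rfl fun k _ => ?_
        simp; ring
    _ = ∑ k, ∫ x, fderiv ℝ f x (b k) * (x k * (‖x‖ ^ 2 + e)⁻¹) :=
        integral_finsetSum _ fun k _ => hI1 k
    _ = - ∑ k : Fin n, ∫ x, f x * ((‖x‖ ^ 2 + e)⁻¹ - 2 * (x k) ^ 2 * ((‖x‖ ^ 2 + e)⁻¹) ^ 2) := by
        rw [← sum_neg_distrib]; exact sum_congr rfl fun k _ => hk k
    _ = _ := by
        rw [← integral_finsetSum _ fun k _ => hI2 k]
        congr 2; ext x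
        rw [← mul_sum, sum_sub_distrib, ← sum_mul, ← mul_sum, EuclideanSpace.real_norm_sq_eq]
        simp

open Filter Topology in
lemma mh_lim (n : ℕ) (hn : 3 ≤ n) (f : EuclideanSpace ℝ (Fin n) → ℝ)
    (hf : ContDiff ℝ 1 f) (hs : HasCompactSupport f) :
    ∫ x, fderiv ℝ f x x * (‖x‖ ^ 2)⁻¹ = - (((n : ℝ) - 2) * ∫ x, f x * (‖x‖ ^ 2)⁻¹) := by
  have hcf : Continuous (fderiv ℝ f) := hf.continuous_fderiv (by norm_num)
  have hcg : Continuous (fun x => fderiv ℝ f x x) := hcf.clm_apply continuous_id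
  have hsg : HasCompactSupport (fun x => fderiv ℝ f x x) := by
    refine (hs.fderiv (𝕜 := ℝ)).mono fun x hx h => hx ?_
    simp [h]
  have hne : ∀ᵐ x : EuclideanSpace ℝ (Fin n), x ≠ 0 := by
    have : Nonempty (Fin n) := ⟨⟨0, by omega⟩⟩
    exact Measure.ae_ne volume 0
  have hW : ∀ e : ℝ, 0 < e → Continuous (fun x : EuclideanSpace ℝ (Fin n) => (‖x‖ ^ 2 + e)⁻¹) := by
    intro e he
    fun_prop (disch := intro x; positivity)
  have hWt : ∀ x : EuclideanSpace ℝ (Fin n), x ≠ 0 →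
      Tendsto (fun e : ℝ => (‖x‖ ^ 2 + e)⁻¹) (𝓝[>] 0) (𝓝 (‖x‖ ^ 2)⁻¹) := by
    intro x hx
    have h0 : ‖x‖ ^ 2 ≠ 0 := by positivity
    have : Tendsto (fun e : ℝ => ‖x‖ ^ 2 + e) (𝓝[>] 0) (𝓝 (‖x‖ ^ 2 + 0)) :=
      (tendsto_const_nhds.add tendsto_id).mono_left nhdsWithin_le_nhds
    rw [add_zero] at this
    exact this.inv₀ h0
  have hWle : ∀ e : ℝ, 0 < e → ∀ x : EuclideanSpace ℝ (Fin n), x ≠ 0 →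
      (‖x‖ ^ 2 + e)⁻¹ ≤ (‖x‖ ^ 2)⁻¹ := by
    intro e he x hx
    have : 0 < ‖x‖ := norm_pos_iff.2 hx
    gcongr; linarith
  have t1 : Tendsto (fun e : ℝ => ∫ x, fderiv ℝ f x x * (‖x‖ ^ 2 + e)⁻¹) (𝓝[>] 0)
      (𝓝 (∫ x, fderiv ℝ f x x * (‖x‖ ^ 2)⁻¹)) := by
    refine tendsto_integral_filter_of_dominated_convergence
      (fun x => ‖fderiv ℝ f x x * (‖x‖ ^ 2)⁻¹‖) ?_ ?_ (mh_int0 n hn _ hcg hsg).norm ?_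
    · filter_upwards [self_mem_nhdsWithin] with e he
      exact (hcg.mul (hW e he)).aestronglyMeasurable
    · filter_upwards [self_mem_nhdsWithin] with e (he : 0 < e)
      filter_upwards [hne] with x hx
      rw [norm_mul, norm_mul, Real.norm_of_nonneg (by positivity : 0 ≤ (‖x‖ ^ 2 + e)⁻¹),
        Real.norm_of_nonneg (by positivity : 0 ≤ (‖x‖ ^ 2)⁻¹)]
      exact mul_le_mul_of_nonneg_left (hWle e he x hx) (norm_nonneg _)
    · filter_upwards [hne] with x hx
      exact (hWt x hx).const_mul _
  have t2 : Tendsto (fun e : ℝ => ∫ x, f x *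
        (n * (‖x‖ ^ 2 + e)⁻¹ - 2 * ‖x‖ ^ 2 * ((‖x‖ ^ 2 + e)⁻¹) ^ 2)) (𝓝[>] 0)
      (𝓝 (∫ x, f x * (n * (‖x‖ ^ 2)⁻¹ - 2 * ‖x‖ ^ 2 * ((‖x‖ ^ 2)⁻¹) ^ 2))) := by
    refine tendsto_integral_filter_of_dominated_convergence
      (fun x => (n + 2) * ‖f x * (‖x‖ ^ 2)⁻¹‖) ?_ ?_
      ((mh_int0 n hn _ hf.continuous hs).norm.const_mul _) ?_
    · filter_upwards [self_mem_nhdsWithin] with e he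
      have := hW e he
      have := hf.continuous
      exact (by fun_prop : Continuous _).aestronglyMeasurable
    · filter_upwards [self_mem_nhdsWithin] with e (he : 0 < e)
      filter_upwards [hne] with x hx
      have h1 := hWle e he x hx
      have h0 : 0 ≤ (‖x‖ ^ 2 + e)⁻¹ := by positivity
      have h2 : ‖x‖ ^ 2 * (‖x‖ ^ 2 + e)⁻¹ ≤ 1 := by
        rw [← div_eq_mul_inv, div_le_one (by positivity)]; linarith
      have h3 : 0 ≤ ‖x‖ ^ 2 * (‖x‖ ^ 2 + e)⁻¹ := by positivity
      rw [norm_mul, norm_mul, Real.norm_of_nonneg (by positivity : 0 ≤ (‖x‖ ^ 2)⁻¹)]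
      have h4 : ‖n * (‖x‖ ^ 2 + e)⁻¹ - 2 * ‖x‖ ^ 2 * ((‖x‖ ^ 2 + e)⁻¹) ^ 2‖
          ≤ (n + 2) * (‖x‖ ^ 2)⁻¹ := by
        have h5 : 2 * ‖x‖ ^ 2 * ((‖x‖ ^ 2 + e)⁻¹) ^ 2 =
          2 * ((‖x‖ ^ 2 * (‖x‖ ^ 2 + e)⁻¹) * (‖x‖ ^ 2 + e)⁻¹) := by ring
        rw [h5]
        have h6 : (‖x‖ ^ 2 * (‖x‖ ^ 2 + e)⁻¹) * (‖x‖ ^ 2 + e)⁻¹ ≤ 1 * (‖x‖ ^ 2)⁻¹ := by gcongr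
        have h7 : 0 ≤ (‖x‖ ^ 2 * (‖x‖ ^ 2 + e)⁻¹) * (‖x‖ ^ 2 + e)⁻¹ := by positivity
        have h8 : (n : ℝ) * (‖x‖ ^ 2 + e)⁻¹ ≤ n * (‖x‖ ^ 2)⁻¹ := by gcongr
        have h9 : 0 ≤ (n : ℝ) * (‖x‖ ^ 2 + e)⁻¹ := by positivity
        rw [Real.norm_eq_abs, abs_le]
        constructor <;> linarith
      calc _ ≤ ‖f x‖ * ((n + 2) * (‖x‖ ^ 2)⁻¹) := mul_le_mul_of_nonneg_left h4 (norm_nonneg _)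
        _ = _ := by ring
    · filter_upwards [hne] with x hx
      exact (((hWt x hx).const_mul _).sub (((hWt x hx).pow 2).const_mul _)).const_mul _
  have t3 := t2.neg
  have heq : (fun e : ℝ => ∫ x, fderiv ℝ f x x * (‖x‖ ^ 2 + e)⁻¹) =ᶠ[𝓝[>] 0]
     fun e => - ∫ x, f x * (n * (‖x‖ ^ 2 + e)⁻¹ - 2 * ‖x‖ ^ 2 * ((‖x‖ ^ 2 + e)⁻¹) ^ 2) := by
    filter_upwards [self_mem_nhdsWithin] with e he
    exact mh_ibp n f hf hs e he
  rw [tendsto_nhds_unique (t1.congr' heq) t3, ← integral_const_mul]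
  congr 1
  refine integral_congr_ae ?_
  filter_upwards [hne] with x hx
  have : ‖x‖ ≠ 0 := norm_ne_zero_iff.2 hx
  field_simp

lemma mh_int (n : ℕ) (hn : 3 ≤ n) (f : EuclideanSpace ℝ (Fin n) → ℝ)
    (hf : Continuous f) (hs : HasCompactSupport f) (p : EuclideanSpace ℝ (Fin n)) :
    Integrable (fun x => f x * (‖x - p‖ ^ 2)⁻¹) := by
  have h := (mh_int0 n hn (fun x => f (x + p)) (by fun_prop)
    (hs.comp_homeomorph (Homeomorph.addRight p))).comp_sub_right p
  simpa using h

lemma mh_id (n : ℕ) (hn : 3 ≤ n) (f : EuclideanSpace ℝ (Fin n) → ℝ)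
    (hf : ContDiff ℝ 1 f) (hs : HasCompactSupport f) (p : EuclideanSpace ℝ (Fin n)) :
    ∫ x, fderiv ℝ f x (x - p) * (‖x - p‖ ^ 2)⁻¹ =
      - (((n : ℝ) - 2) * ∫ x, f x * (‖x - p‖ ^ 2)⁻¹) := by
  have h := mh_lim n hn (fun x => f (x + p)) (by fun_prop)
    (hs.comp_homeomorph (Homeomorph.addRight p))
  simp only [fderiv_comp_add_right] at h
  rw [← integral_sub_right_eq_self _ p, ← integral_sub_right_eq_self (fun x => f (x + p) * _) p] at h
  simpa using h

lemma mh_par (m : ℕ) {E : Type*} [NormedAddCommGroup E] [InnerProductSpace ℝ E] (V : Fin m → E) :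
    (∑ i : Fin m, ∑ j : Fin m, if i < j then ‖V i - V j‖ ^ 2 else 0) =
      m * ∑ i, ‖V i‖ ^ 2 - ‖∑ i, V i‖ ^ 2 := by
  have h1 : ∑ i : Fin m, ∑ j : Fin m, ‖V i - V j‖ ^ 2 =
      2 * ∑ i : Fin m, ∑ j : Fin m, if i < j then ‖V i - V j‖ ^ 2 else 0 := by
    have hsw : (∑ i : Fin m, ∑ j : Fin m, if i < j then ‖V i - V j‖ ^ 2 else 0) =
      ∑ i : Fin m, ∑ j : Fin m, if j < i then ‖V i - V j‖ ^ 2 else 0 := by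
      rw [sum_comm]
      simp only [norm_sub_rev]
    rw [two_mul]
    nth_rewrite 2 [hsw]
    simp only [← sum_add_distrib]
    refine sum_congr rfl fun i _ => sum_congr rfl fun j _ => ?_
    rcases lt_trichotomy i j with h | h | h
    · simp [h, h.not_gt]
    · simp [h]
    · simp [h, h.not_gt]
  have h2 : ∑ i : Fin m, ∑ j : Fin m, ‖V i - V j‖ ^ 2 =
      2 * (m * ∑ i, ‖V i‖ ^ 2 - ‖∑ i, V i‖ ^ 2) := by
    rw [← real_inner_self_eq_norm_sq (∑ i, V i), sum_inner]
    simp only [inner_sum, norm_sub_sq_real, sum_add_distrib, sum_sub_distrib, ← mul_sum]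
    simp [← mul_sum]
    ring
  linarith

theorem multipolar_hardy_parallelogram (n m : ℕ) (hn : 3 ≤ n) (hm : 2 ≤ m)
    (p : Fin m → EuclideanSpace ℝ (Fin n)) (hp : Function.Injective p)
    (u : EuclideanSpace ℝ (Fin n) → ℝ)
    (hu : ContDiff ℝ (⊤ : ℕ∞) u) (hsupp : HasCompactSupport u) :
    ∫ x, ‖gradient u x‖ ^ 2 ≥
      ((n : ℝ) - 2) ^ 2 / m ^ 2 *
        ∑ i : Fin m, ∑ j : Fin m, if i < j then
          ∫ x, ‖(‖x - p i‖ ^ 2)⁻¹ • (x - p i) - (‖x - p j‖ ^ 2)⁻¹ • (x - p j)‖ ^ 2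
            * u x ^ 2 else 0 := by
  have hu1 : ContDiff ℝ 1 u := hu.of_le (by exact_mod_cast le_top)
  have hud : Differentiable ℝ u := hu1.differentiable (by norm_num)
  have hf : ContDiff ℝ 1 (fun x => u x ^ 2) := hu1.pow 2
  have hs : HasCompactSupport (fun x => u x ^ 2) := by
    refine hsupp.mono fun x hx h => hx ?_
    simp [h]
  have hcdf : Continuous (fderiv ℝ (fun x => u x ^ 2)) := hf.continuous_fderiv (by norm_num)
  have hgn : ∀ x, ‖gradient u x‖ = ‖fderiv ℝ u x‖ := by
    intro x; rw [← toDual_gradient, LinearIsometryEquiv.norm_map]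
  have hfd : ∀ x v, fderiv ℝ (fun x => u x ^ 2) x v = 2 * u x * inner ℝ (gradient u x) v := by
    intro x v
    rw [((hud x).hasFDerivAt.pow 2).fderiv, ← toDual_gradient]
    simp
  set V : Fin m → EuclideanSpace ℝ (Fin n) → EuclideanSpace ℝ (Fin n) :=
    fun i x => (‖x - p i‖ ^ 2)⁻¹ • (x - p i) with hV
  have hVn : ∀ i x, ‖V i x‖ ^ 2 = (‖x - p i‖ ^ 2)⁻¹ := by
    intro i x
    simp only [hV, norm_smul, norm_inv, norm_pow, norm_norm]
    by_cases h : ‖x - p i‖ = 0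
    · simp [h]
    · field_simp
  have hVm : ∀ i, Measurable (V i) := by
    intro i; simp only [hV]; fun_prop
  have hIg : Integrable (fun x => ‖gradient u x‖ ^ 2) := by
    simp only [hgn]
    refine Continuous.integrable_of_hasCompactSupport
      ((hu1.continuous_fderiv (by norm_num)).norm.pow 2) ?_
    refine (hsupp.fderiv (𝕜 := ℝ)).mono fun x hx h => hx ?_
    simp [h]
  have hIA : ∀ i, Integrable
      (fun x => fderiv ℝ (fun x => u x ^ 2) x (x - p i) * (‖x - p i‖ ^ 2)⁻¹) := by
    intro i
    refine mh_int n hn _ (hcdf.clm_apply (by fun_prop)) ?_ (p i)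
    refine (hs.fderiv (𝕜 := ℝ)).mono fun x hx h => hx ?_
    simp only [h]; simp
  have hIB : ∀ i, Integrable (fun x => u x ^ 2 * (‖x - p i‖ ^ 2)⁻¹) := fun i =>
    mh_int n hn _ hf.continuous hs (p i)
  have hIC : ∀ i j, Integrable (fun x => ‖V i x - V j x‖ ^ 2 * u x ^ 2) := by
    intro i j
    refine (((hIB i).add (hIB j)).const_mul 2).mono' ?_ ?_
    · have := hVm i
      have := hVm j
      have := hu.continuous.measurable
      exact (by fun_prop : Measurable _).aestronglyMeasurable
    · refine Filter.Eventually.of_forall fun x => ?_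
      rw [Real.norm_of_nonneg (by positivity)]
      simp only [Pi.add_apply, ← hVn]
      have h := parallelogram_law_with_norm ℝ (V i x) (V j x)
      have h1 : ‖V i x - V j x‖ ^ 2 ≤ 2 * (‖V i x‖ ^ 2 + ‖V j x‖ ^ 2) := by
        nlinarith [sq_nonneg ‖V i x + V j x‖]
      nlinarith [mul_le_mul_of_nonneg_right h1 (sq_nonneg (u x))]
  have hIC' : ∀ i j : Fin m,
      Integrable (fun x => if i < j then ‖V i x - V j x‖ ^ 2 * u x ^ 2 else 0) := by
    intro i j
    split_ifs
    · exact hIC i j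
    · exact integrable_zero _ _ _
  have hm0 : (m : ℝ) ≠ 0 := by positivity
  set c : ℝ := ((n : ℝ) - 2) / m with hc
  have hpt : ∀ x, 0 ≤ (‖gradient u x‖ ^ 2
      + c * ∑ i, fderiv ℝ (fun x => u x ^ 2) x (x - p i) * (‖x - p i‖ ^ 2)⁻¹)
      + (c ^ 2 * m * ∑ i, u x ^ 2 * (‖x - p i‖ ^ 2)⁻¹
      - c ^ 2 * ∑ i : Fin m, ∑ j : Fin m, if i < j then ‖V i x - V j x‖ ^ 2 * u x ^ 2 else 0) := by
    intro x
    have h0 := sq_nonneg ‖gradient u x + (c * u x) • ∑ i, V i x‖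
    rw [norm_add_sq_real, norm_smul, mul_pow, inner_smul_right, Real.norm_eq_abs, sq_abs] at h0
    have h1 := mh_par m (fun i => V i x)
    have h2 : (∑ i : Fin m, ∑ j : Fin m, if i < j then ‖V i x - V j x‖ ^ 2 * u x ^ 2 else 0)
      = (∑ i : Fin m, ∑ j : Fin m, if i < j then ‖V i x - V j x‖ ^ 2 else 0) * u x ^ 2 := by
      simp only [sum_mul, ite_mul, zero_mul]
    have h3 : ∑ i, fderiv ℝ (fun x => u x ^ 2) x (x - p i) * (‖x - p i‖ ^ 2)⁻¹
        = 2 * u x * inner ℝ (gradient u x) (∑ i, V i x) := by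
      rw [inner_sum, mul_sum]
      refine sum_congr rfl fun i _ => ?_
      rw [hfd]; simp only [hV, inner_smul_right]; ring
    have h4 : ∑ i, u x ^ 2 * (‖x - p i‖ ^ 2)⁻¹ = u x ^ 2 * ∑ i, ‖V i x‖ ^ 2 := by
      rw [mul_sum]; exact sum_congr rfl fun i _ => by rw [hVn]
    rw [h2, h3, h4, h1]
    refine h0.trans_eq ?_
    ring
  have hint : 0 ≤ ∫ x, ((‖gradient u x‖ ^ 2
      + c * ∑ i, fderiv ℝ (fun x => u x ^ 2) x (x - p i) * (‖x - p i‖ ^ 2)⁻¹)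
      + (c ^ 2 * m * ∑ i, u x ^ 2 * (‖x - p i‖ ^ 2)⁻¹
      - c ^ 2 * ∑ i : Fin m, ∑ j : Fin m, if i < j then ‖V i x - V j x‖ ^ 2 * u x ^ 2 else 0)) :=
    integral_nonneg hpt
  have hIAs := integrable_finsetSum univ fun i _ => hIA i
  have hIBs := integrable_finsetSum univ fun i _ => hIB i
  have hICs := integrable_finsetSum univ fun i _ =>
    integrable_finsetSum univ fun j _ => hIC' i j
  rw [integral_add (hIg.fun_add (hIAs.const_mul c))
      (by exact (hIBs.const_mul (c ^ 2 * m)).sub (hICs.const_mul (c ^ 2))),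
    integral_add hIg (hIAs.const_mul c),
    integral_sub (hIBs.const_mul (c ^ 2 * m)) (hICs.const_mul (c ^ 2)),
    integral_const_mul, integral_const_mul, integral_const_mul,
    integral_finsetSum _ fun i _ => hIA i, integral_finsetSum _ fun i _ => hIB i,
    integral_finsetSum _ fun i _ => integrable_finsetSum univ fun j _ => hIC' i j] at hint
  simp only [mh_id n hn _ hf hs, sum_neg_distrib, ← mul_sum] at hint
  have hS : ∑ i : Fin m, ∫ x, ∑ j : Fin m, (if i < j then ‖V i x - V j x‖ ^ 2 * u x ^ 2 else 0)
      = ∑ i : Fin m, ∑ j : Fin m, if i < j then ∫ x, ‖V i x - V j x‖ ^ 2 * u x ^ 2 else 0 := by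
    refine sum_congr rfl fun i _ => ?_
    rw [integral_finsetSum _ fun j _ => hIC' i j]
    refine sum_congr rfl fun j _ => ?_
    split_ifs <;> simp
  rw [hS] at hint
  have hcm : (n : ℝ) - 2 = c * m := by rw [hc]; field_simp
  rw [← div_pow, ← hc, ge_iff_le]
  rw [hcm] at hint
  linarith
end

section
/- Let n ≥ 3, m ≥ 2, and x_1, …, x_m ∈ ℝ^n be pairwise distinct. Then for every u ∈ C_c^∞(ℝ^n), ∫_{ℝ^n} |∇u|² dx ≥ ((n-2)²/m²) Σ_{1 ≤ i < j ≤ m} ∫_{ℝ^n} (|x_i − x_j|² / (|x − x_i|² |x − x_j|²)) u(x)² dx. -/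
open MeasureTheory Finset

lemma mh_integral_fderiv_zero {n : ℕ} (F : EuclideanSpace ℝ (Fin n) → ℝ)
    (hF : ContDiff ℝ 1 F) (hs : HasCompactSupport F) (v : EuclideanSpace ℝ (Fin n)) :
    Integrable (fun x => fderiv ℝ F x v) ∧ ∫ x, fderiv ℝ F x v = 0 := by
  have hi : Integrable (fun x => fderiv ℝ F x v) := by
    apply Continuous.integrable_of_hasCompactSupport
    · exact (hF.continuous_fderiv (by norm_num)).clm_apply continuous_const
    · exact hs.fderiv_apply (𝕜 := ℝ) v
  refine ⟨hi, ?_⟩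
  have h := integral_mul_fderiv_eq_neg_fderiv_mul_of_integrable (μ := volume)
    (f := F) (g := fun _ => (1 : ℝ)) (v := v) (by simpa using hi) (by simp)
    (by simpa using hF.continuous.integrable_of_hasCompactSupport hs)
    (fun x _ => hF.differentiable (by norm_num) x) (fun x _ => by simp)
  simp at h
  exact h

/-- the regularised field -/
noncomputable def mhField {n : ℕ} (p : EuclideanSpace ℝ (Fin n)) (ε : ℝ)
    (x : EuclideanSpace ℝ (Fin n)) : EuclideanSpace ℝ (Fin n) :=
  (‖x - p‖ ^ 2 + ε)⁻¹ • (x - p)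

noncomputable def mhG {n : ℕ} (u : EuclideanSpace ℝ (Fin n) → ℝ) (p : EuclideanSpace ℝ (Fin n))
    (ε : ℝ) (x : EuclideanSpace ℝ (Fin n)) : ℝ :=
  2 * u x * inner ℝ (gradient u x) (mhField p ε x) +
    u x ^ 2 * (n * (‖x - p‖ ^ 2 + ε)⁻¹ - 2 * ‖mhField p ε x‖ ^ 2)

lemma mhField_contDiff {n : ℕ} (p : EuclideanSpace ℝ (Fin n)) (ε : ℝ) (hε : 0 < ε) :
    ContDiff ℝ 1 (mhField p ε) := by
  unfold mhField
  refine ContDiff.smul (f := fun x => (‖x - p‖ ^ 2 + ε)⁻¹) (g := fun x => x - p) ?_ ?_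
  · apply ContDiff.inv
    · exact ((contDiff_id.sub contDiff_const).norm_sq ℝ).add contDiff_const
    · intro x; positivity
  · exact contDiff_id.sub contDiff_const

lemma mhG_eq {n : ℕ} (u : EuclideanSpace ℝ (Fin n) → ℝ) (hu : ContDiff ℝ 1 u)
    (p : EuclideanSpace ℝ (Fin n)) (ε : ℝ) (hε : 0 < ε) (x : EuclideanSpace ℝ (Fin n)) :
    mhG u p ε x = ∑ k : Fin n,
      fderiv ℝ (fun x => u x ^ 2 * mhField p ε x k) x (EuclideanSpace.single k 1) := by
  have hq0 : ‖x - p‖ ^ 2 + ε ≠ 0 := by positivity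
  have key : ∀ k : Fin n,
      fderiv ℝ (fun x => u x ^ 2 * mhField p ε x k) x (EuclideanSpace.single k 1)
      = 2 * u x * (gradient u x k * mhField p ε x k) +
        u x ^ 2 * ((‖x - p‖ ^ 2 + ε)⁻¹ - 2 * (mhField p ε x k) ^ 2) := by
    intro k
    have hu1 : HasFDerivAt u (fderiv ℝ u x) x := (hu.differentiable (by norm_num) x).hasFDerivAt
    have hq : HasFDerivAt (fun x => ‖x - p‖ ^ 2 + ε) (2 • (innerSL ℝ (x - p))) x := by
      have := (((hasFDerivAt_id (𝕜 := ℝ) x).sub_const p).norm_sq).add_const ε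
      simpa using this
    have hc : HasFDerivAt (fun x : EuclideanSpace ℝ (Fin n) => (x - p) k)
        (EuclideanSpace.proj k : EuclideanSpace ℝ (Fin n) →L[ℝ] ℝ) x := by
      have := ((EuclideanSpace.proj k : EuclideanSpace ℝ (Fin n) →L[ℝ] ℝ).hasFDerivAt
        (x := x)).sub_const (p k)
      simpa using this
    have hi := (hasDerivAt_inv hq0).comp_hasFDerivAt x hq
    have H := (hu1.pow 2).mul (hi.mul hc)
    have H' : HasFDerivAt (fun x => u x ^ 2 * mhField p ε x k) _ x := H
    rw [H'.fderiv]
    have hg : fderiv ℝ u x (EuclideanSpace.single k 1) = gradient u x k := by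
      rw [← inner_gradient_left, EuclideanSpace.inner_single_right]
      simp
    simp [hg, mhField, EuclideanSpace.inner_single_right]
    field_simp
    ring
  simp_rw [key]
  rw [Finset.sum_add_distrib, ← Finset.mul_sum, ← Finset.mul_sum, Finset.sum_sub_distrib,
    ← Finset.mul_sum]
  simp only [mhG, EuclideanSpace.norm_sq_eq (mhField p ε x), PiLp.inner_apply]
  simp [mul_comm]

lemma mhG_integral {n : ℕ} (u : EuclideanSpace ℝ (Fin n) → ℝ) (hu : ContDiff ℝ 1 u)
    (hs : HasCompactSupport u) (p : EuclideanSpace ℝ (Fin n)) (ε : ℝ) (hε : 0 < ε) :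
    Integrable (mhG u p ε) ∧ ∫ x, mhG u p ε x = 0 := by
  have h : ∀ k : Fin n, _ := fun k =>
    mh_integral_fderiv_zero (fun x => u x ^ 2 * mhField p ε x k)
      ((hu.pow 2).mul (contDiff_euclidean.1 (mhField_contDiff p ε hε) k))
      (by
        have : HasCompactSupport (fun x => u x ^ 2) := by
          simpa [Function.comp_def] using hs.comp_left (g := fun t : ℝ => t ^ 2) (by simp)
        exact this.mul_right) (EuclideanSpace.single k 1)
  have he : mhG u p ε = fun x => ∑ k : Fin n,
      fderiv ℝ (fun x => u x ^ 2 * mhField p ε x k) x (EuclideanSpace.single k 1) :=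
    funext (mhG_eq u hu p ε hε)
  rw [he]
  refine ⟨integrable_finsetSum _ fun k _ => (h k).1, ?_⟩
  rw [integral_finsetSum _ fun k _ => (h k).1]
  exact Finset.sum_eq_zero fun k _ => (h k).2

lemma mh_parallelogram {E : Type*} [NormedAddCommGroup E] [InnerProductSpace ℝ E] {m : ℕ}
    (a : Fin m → E) :
    ∑ i, ∑ j, (if i < j then ‖a i - a j‖ ^ 2 else 0) = m * ∑ i, ‖a i‖ ^ 2 - ‖∑ i, a i‖ ^ 2 := by
  have h1 : ∑ i, ∑ j, ‖a i - a j‖ ^ 2 = 2 * (m * ∑ i, ‖a i‖ ^ 2 - ‖∑ i, a i‖ ^ 2) := by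
    simp_rw [norm_sub_sq_real, Finset.sum_add_distrib, Finset.sum_sub_distrib]
    rw [← real_inner_self_eq_norm_sq (∑ i, a i), sum_inner]
    simp_rw [inner_sum, ← Finset.mul_sum]
    simp [← Finset.mul_sum]
    ring
  have h2 : ∑ i, ∑ j, ‖a i - a j‖ ^ 2 =
      ∑ i, ∑ j, (if i < j then ‖a i - a j‖ ^ 2 else 0) +
      ∑ i, ∑ j, (if j < i then ‖a i - a j‖ ^ 2 else 0) := by
    simp_rw [← Finset.sum_add_distrib]
    refine Finset.sum_congr rfl fun i _ => Finset.sum_congr rfl fun j _ => ?_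
    rcases lt_trichotomy i j with h | h | h
    · simp [h, h.not_gt]
    · simp [h]
    · simp [h, h.not_gt]
  have h3 : ∑ i, ∑ j, (if j < i then ‖a i - a j‖ ^ 2 else 0) =
      ∑ i, ∑ j, (if i < j then ‖a i - a j‖ ^ 2 else 0) := by
    rw [Finset.sum_comm]
    simp_rw [norm_sub_rev]
  linarith

/-- regularised weight -/
noncomputable def mhS {n m : ℕ} (p : Fin m → EuclideanSpace ℝ (Fin n)) (ε : ℝ)
    (x : EuclideanSpace ℝ (Fin n)) : ℝ :=
  ∑ i, ∑ j, (if i < j then ‖mhField (p i) ε x - mhField (p j) ε x‖ ^ 2 else 0)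

lemma mhField_norm_sq_le {n : ℕ} (p : EuclideanSpace ℝ (Fin n)) (ε : ℝ) (hε : 0 < ε)
    (x : EuclideanSpace ℝ (Fin n)) :
    ‖mhField p ε x‖ ^ 2 ≤ (‖x - p‖ ^ 2 + ε)⁻¹ := by
  have hq0 : 0 < ‖x - p‖ ^ 2 + ε := by positivity
  rw [mhField, norm_smul, mul_pow, norm_inv, Real.norm_of_nonneg hq0.le, inv_pow,
    inv_mul_le_iff₀ (by positivity)]
  rw [pow_two (_ + _), mul_assoc, mul_inv_cancel₀ hq0.ne']
  linarith

lemma mh_pointwise {n m : ℕ} (hn : 3 ≤ n) (hm : 2 ≤ m) (p : Fin m → EuclideanSpace ℝ (Fin n))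
    (u : EuclideanSpace ℝ (Fin n) → ℝ) (ε : ℝ) (hε : 0 < ε) (x : EuclideanSpace ℝ (Fin n)) :
    ((n : ℝ) - 2) ^ 2 / m ^ 2 * mhS p ε x * u x ^ 2 ≤
      ‖gradient u x‖ ^ 2 + ((n : ℝ) - 2) / m * ∑ i, mhG u (p i) ε x := by
  have hm0 : (0 : ℝ) < m := by exact_mod_cast (by omega : 0 < m)
  have hn0 : (0 : ℝ) < (n : ℝ) - 2 := by
    have : (3 : ℝ) ≤ n := by exact_mod_cast hn
    linarith
  set c : ℝ := ((n : ℝ) - 2) / m with hc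
  have hc0 : 0 < c := by positivity
  have hcm : (n : ℝ) - 2 = c * m := by rw [hc]; field_simp
  have h0 : 0 ≤ ‖gradient u x + (u x * c) • ∑ i, mhField (p i) ε x‖ ^ 2 := by positivity
  rw [norm_add_sq_real, inner_smul_right, norm_smul, mul_pow, inner_sum, Real.norm_eq_abs,
    sq_abs] at h0
  have hG : ∑ i, (2 * u x * inner ℝ (gradient u x) (mhField (p i) ε x) +
      u x ^ 2 * ((c * m) * ‖mhField (p i) ε x‖ ^ 2)) ≤ ∑ i, mhG u (p i) ε x := by
    refine Finset.sum_le_sum fun i _ => ?_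
    unfold mhG
    have := mhField_norm_sq_le (p i) ε hε x
    have h2 : (0 : ℝ) ≤ n := by positivity
    have h3 := mul_le_mul_of_nonneg_left this h2
    rw [← hcm]
    gcongr
    linarith
  rw [Finset.sum_add_distrib, ← Finset.mul_sum, ← Finset.mul_sum, ← Finset.mul_sum] at hG
  have hG' := mul_le_mul_of_nonneg_left hG hc0.le
  rw [mhS, mh_parallelogram, ← div_pow]
  nlinarith [hG', h0]

lemma mh_eps {n m : ℕ} (hn : 3 ≤ n) (hm : 2 ≤ m) (p : Fin m → EuclideanSpace ℝ (Fin n))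
    (u : EuclideanSpace ℝ (Fin n) → ℝ) (hu : ContDiff ℝ 1 u)
    (hs : HasCompactSupport u) (ε : ℝ) (hε : 0 < ε) :
    Continuous (fun x => ((n : ℝ) - 2) ^ 2 / m ^ 2 * mhS p ε x * u x ^ 2) ∧
    ∫⁻ x, ENNReal.ofReal (((n : ℝ) - 2) ^ 2 / m ^ 2 * mhS p ε x * u x ^ 2) ≤
      ENNReal.ofReal (∫ x, ‖gradient u x‖ ^ 2) := by
  have hgc : Continuous (gradient u) :=
    (InnerProductSpace.toDual ℝ _).symm.continuous.comp (hu.continuous_fderiv (by norm_num))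
  have hgs : HasCompactSupport (gradient u) :=
    (hs.fderiv (𝕜 := ℝ)).comp_left (g := (InnerProductSpace.toDual ℝ _).symm) (by simp)
  have hgi : Integrable (fun x => ‖gradient u x‖ ^ 2) := by
    apply Continuous.integrable_of_hasCompactSupport (by fun_prop)
    exact hgs.comp_left (g := fun v => ‖v‖ ^ 2) (by simp)
  have hcont : Continuous (fun x => ((n : ℝ) - 2) ^ 2 / m ^ 2 * mhS p ε x * u x ^ 2) := by
    have h1 : ∀ i, Continuous (mhField (p i) ε) := fun i =>
      (mhField_contDiff (p i) ε hε).continuous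
    have h2 : Continuous u := hu.continuous
    have h3 : Continuous (mhS p ε) := by
      unfold mhS
      refine continuous_finsetSum _ fun i _ => continuous_finsetSum _ fun j _ => ?_
      split_ifs
      · exact ((h1 i).sub (h1 j)).norm.pow 2
      · exact continuous_const
    fun_prop
  refine ⟨hcont, ?_⟩
  have hint : Integrable (fun x => ((n : ℝ) - 2) ^ 2 / m ^ 2 * mhS p ε x * u x ^ 2) := by
    apply hcont.integrable_of_hasCompactSupport
    have : HasCompactSupport (fun x => u x ^ 2) := by
      simpa [Function.comp_def] using hs.comp_left (g := fun t : ℝ => t ^ 2) (by simp)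
    exact this.mul_left
  have hnn : ∀ x, 0 ≤ ((n : ℝ) - 2) ^ 2 / m ^ 2 * mhS p ε x * u x ^ 2 := by
    intro x
    have : 0 ≤ mhS p ε x := by
      unfold mhS
      refine Finset.sum_nonneg fun i _ => Finset.sum_nonneg fun j _ => ?_
      split_ifs <;> positivity
    positivity
  rw [← ofReal_integral_eq_lintegral_ofReal hint (Filter.Eventually.of_forall hnn)]
  apply ENNReal.ofReal_le_ofReal
  have hG := fun i => mhG_integral u hu hs (p i) ε hε
  have hGi : Integrable (fun x => ((n : ℝ) - 2) / m * ∑ i, mhG u (p i) ε x) :=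
    (integrable_finsetSum _ fun i _ => (hG i).1).const_mul _
  calc _ ≤ ∫ x, (‖gradient u x‖ ^ 2 + ((n : ℝ) - 2) / m * ∑ i, mhG u (p i) ε x) :=
        integral_mono hint (hgi.add hGi) (fun x => mh_pointwise hn hm p u ε hε x)
    _ = _ := by
        rw [integral_add hgi hGi, integral_const_mul, integral_finsetSum _ fun i _ => (hG i).1]
        simp [fun i => (hG i).2]

lemma mh_tendsto {n : ℕ} (p q x : EuclideanSpace ℝ (Fin n)) (hp : x ≠ p) (hq : x ≠ q) :
    Filter.Tendsto (fun k : ℕ => ‖mhField p (1 / ((k : ℝ) + 1)) x -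
      mhField q (1 / ((k : ℝ) + 1)) x‖ ^ 2) Filter.atTop
      (nhds (‖p - q‖ ^ 2 / (‖x - p‖ ^ 2 * ‖x - q‖ ^ 2))) := by
  have hf : ∀ p : EuclideanSpace ℝ (Fin n), x ≠ p →
      Filter.Tendsto (fun k : ℕ => mhField p (1 / ((k : ℝ) + 1)) x) Filter.atTop
        (nhds ((‖x - p‖ ^ 2)⁻¹ • (x - p))) := by
    intro p hp
    unfold mhField
    have h0 : ‖x - p‖ ^ 2 + 0 ≠ 0 := by
      have := norm_pos_iff.2 (sub_ne_zero.2 hp)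
      positivity
    have := ((tendsto_const_nhds (x := ‖x - p‖ ^ 2)).add
      (tendsto_one_div_add_atTop_nhds_zero_nat (𝕜 := ℝ))).inv₀ h0
    rw [add_zero] at this
    exact this.smul_const _
  have h := (((hf p hp).sub (hf q hq)).norm).pow 2
  convert h using 2
  have hd := dist_div_norm_sq_smul (sub_ne_zero.2 hp) (sub_ne_zero.2 hq) 1
  rw [dist_eq_norm, dist_eq_norm] at hd
  simp only [one_div, inv_pow, one_pow] at hd
  rw [hd, sub_sub_sub_cancel_left, norm_sub_rev q p]
  rw [mul_pow, inv_pow, mul_pow]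
  field_simp


theorem multipolar_hardy_distance_form (n m : ℕ) (hn : 3 ≤ n) (hm : 2 ≤ m)
    (p : Fin m → EuclideanSpace ℝ (Fin n)) (hp : Function.Injective p)
    (u : EuclideanSpace ℝ (Fin n) → ℝ)
    (hu : ContDiff ℝ (⊤ : ℕ∞) u) (hsupp : HasCompactSupport u) :
    ∫ x, ‖gradient u x‖ ^ 2 ≥
      ((n : ℝ) - 2) ^ 2 / m ^ 2 *
        ∑ i : Fin m, ∑ j : Fin m, if i < j then
          ∫ x, ‖p i - p j‖ ^ 2 / (‖x - p i‖ ^ 2 * ‖x - p j‖ ^ 2) * u x ^ 2 else 0 := by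
  have hu1 : ContDiff ℝ 1 u := hu.of_le (by exact_mod_cast le_top)
  have hm0 : (0 : ℝ) < m := by exact_mod_cast (by omega : 0 < m)
  have hn0 : (0 : ℝ) < (n : ℝ) - 2 := by
    have : (3 : ℝ) ≤ n := by exact_mod_cast hn
    linarith
  have : Nonempty (Fin n) := ⟨⟨0, by omega⟩⟩
  set C : ℝ := ((n : ℝ) - 2) ^ 2 / m ^ 2 with hC
  have hC0 : 0 < C := by positivity
  set w : Fin m → Fin m → EuclideanSpace ℝ (Fin n) → ℝ := fun i j x =>
    if i < j then ‖p i - p j‖ ^ 2 / (‖x - p i‖ ^ 2 * ‖x - p j‖ ^ 2) * u x ^ 2 else 0 with hw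
  have hw0 : ∀ i j x, 0 ≤ w i j x := by
    intro i j x
    simp only [hw]
    split_ifs <;> positivity
  have hum : Measurable u := hu1.continuous.measurable
  have hwm : ∀ i j, Measurable (w i j) := by
    intro i j
    simp only [hw]
    split_ifs
    · fun_prop
    · exact measurable_const
  set T : EuclideanSpace ℝ (Fin n) → ℝ := fun x => ∑ i, ∑ j, w i j x with hT
  have hT0 : ∀ x, 0 ≤ T x := fun x =>
    Finset.sum_nonneg fun i _ => Finset.sum_nonneg fun j _ => hw0 i j x
  have hTm : Measurable T :=
    Finset.measurable_fun_sum _ fun i _ => Finset.measurable_fun_sum _ fun j _ => hwm i j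
  have hε : ∀ k : ℕ, 0 < 1 / ((k : ℝ) + 1) := fun k => by positivity
  have hlim : ∀ᵐ x, Filter.Tendsto
      (fun k : ℕ => ENNReal.ofReal (C * mhS p (1 / ((k : ℝ) + 1)) x * u x ^ 2)) Filter.atTop
      (nhds (ENNReal.ofReal (C * T x))) := by
    have hne : ∀ᵐ x : EuclideanSpace ℝ (Fin n), ∀ i, x ≠ p i :=
      ae_all_iff.2 fun i => Measure.ae_ne volume (p i)
    filter_upwards [hne] with x hx
    apply ENNReal.tendsto_ofReal
    simp_rw [mul_assoc]
    refine Filter.Tendsto.const_mul C ?_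
    simp only [mhS, hT, Finset.sum_mul]
    refine tendsto_finsetSum _ fun i _ => tendsto_finsetSum _ fun j _ => ?_
    simp only [hw]
    split_ifs
    · exact (mh_tendsto (p i) (p j) x (hx i) (hx j)).mul_const _
    · simp
  have hfatou : ∫⁻ x, ENNReal.ofReal (C * T x) ≤ ENNReal.ofReal (∫ x, ‖gradient u x‖ ^ 2) := by
    calc ∫⁻ x, ENNReal.ofReal (C * T x)
        = ∫⁻ x, Filter.liminf (fun k : ℕ =>
            ENNReal.ofReal (C * mhS p (1 / ((k : ℝ) + 1)) x * u x ^ 2)) Filter.atTop :=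
          lintegral_congr_ae (hlim.mono fun x hx => hx.liminf_eq.symm)
      _ ≤ Filter.liminf (fun k : ℕ => ∫⁻ x,
            ENNReal.ofReal (C * mhS p (1 / ((k : ℝ) + 1)) x * u x ^ 2)) Filter.atTop :=
          lintegral_liminf_le fun k =>
            (mh_eps hn hm p u hu1 hsupp _ (hε k)).1.measurable.ennreal_ofReal
      _ ≤ _ := by
          refine (Filter.liminf_le_liminf (Filter.Eventually.of_forall fun k =>
            (mh_eps hn hm p u hu1 hsupp _ (hε k)).2)).trans ?_
          simp
  have hCT0 : ∀ x, 0 ≤ C * T x := fun x => mul_nonneg hC0.le (hT0 x)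
  have hCTi : Integrable (fun x => C * T x) := by
    refine ⟨(hTm.const_mul C).aestronglyMeasurable, ?_⟩
    rw [hasFiniteIntegral_iff_ofReal (Filter.Eventually.of_forall hCT0)]
    exact hfatou.trans_lt ENNReal.ofReal_lt_top
  have hTi : Integrable T := by
    have := hCTi.const_mul C⁻¹
    simpa [← mul_assoc, hC0.ne'] using this
  have hwi : ∀ i j, Integrable (w i j) := by
    intro i j
    refine hTi.mono (hwm i j).aestronglyMeasurable (Filter.Eventually.of_forall fun x => ?_)
    rw [Real.norm_of_nonneg (hw0 i j x), Real.norm_of_nonneg (hT0 x)]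
    calc w i j x ≤ ∑ j, w i j x :=
          Finset.single_le_sum (f := fun j => w i j x) (fun j _ => hw0 i j x) (Finset.mem_univ j)
      _ ≤ T x := Finset.single_le_sum (f := fun i => ∑ j, w i j x)
          (fun i _ => Finset.sum_nonneg fun j _ => hw0 i j x) (Finset.mem_univ i)
  have hsum : (∑ i : Fin m, ∑ j : Fin m, if i < j then
      ∫ x, ‖p i - p j‖ ^ 2 / (‖x - p i‖ ^ 2 * ‖x - p j‖ ^ 2) * u x ^ 2 else 0) = ∫ x, T x := by
    simp only [hT]
    rw [integral_finsetSum _ fun i _ => integrable_finsetSum _ fun j _ => hwi i j]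
    refine Finset.sum_congr rfl fun i _ => ?_
    rw [integral_finsetSum _ fun j _ => hwi i j]
    refine Finset.sum_congr rfl fun j _ => ?_
    simp only [hw]
    split_ifs <;> simp
  rw [hsum, ← integral_const_mul, ge_iff_le]
  rw [← ofReal_integral_eq_lintegral_ofReal hCTi (Filter.Eventually.of_forall hCT0)] at hfatou
  exact (ENNReal.ofReal_le_ofReal_iff (integral_nonneg fun x => by positivity)).1 hfatou
end
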